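/- arXiv:2203.00671 — 3 statements merged into one kernel-verified Lean document; each statement's English description precedes it below -/
import Mathlib

section
/- (One cost-scaling step halves the optimality parameter.) Consider a min-cost circulation instance on G = (V,E) with m = |E| ≥ 2, integral capacities u ∈ ℤ^E with u_e ≥ 1, and integral costs c ∈ ℤ^E. Let f be a feasible integral circulation that is ε-optimal, witnessed by y ∈ ℝ^V. For each residual arc a of G(f), let ĉ_a denote its reduced cost with respect to y, and let c̃_a be a multiple of ε/m^8 with |c̃_a − ĉ_a| ≤ ε/m^8. Suppose Δ is an integral vector indexed by the residual arcs with 0 ≤ Δ_a ≤ (residual capacity of a), satisfying flow conservation at every vertex, with Δ_{(e,+)}·Δ_{(e,−)} = 0 for every e, and suppose there exist Δy ∈ ℝ^V and s⁻, s⁺ ≥ 0 (indexed by residual arcs) with Δy_{tail(a)} − Δy_{head(a)} + s⁻_a − s⁺_a = c̃_a for every residual arc a, and satisfying complementary slackness: Δ_a < (residual capacity of a) implies s⁺_a = 0, and Δ_a > 0 implies s⁻_a = 0. Define f′ ∈ ℤ^E by f′_e := f_e + Δ_{(e,+)} − Δ_{(e,−)} (with absent coordinates taken as 0). Then f′ is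 a feasible integral circulation, every residual arc of G(f′) has reduced cost with respect to y + Δy at least −ε/m^8, and in particular f′ is (ε/2)-optimal. -/
open Finset

/-!
An arc `a` that is residual after the augmentation either was not saturated by `Δ`, or its
reverse carries flow of `Δ`. Complementary slackness then makes the rounded cost of `a`, reduced
by `Δy`, nonnegative in the first case, and that of the reverse arc nonpositive in the second;
as reversing an arc negates its reduced cost, undoing the rounding costs at most one rounding
error `δ` either way.
-/

section ReducedCost

variable {A V K : Type*} [AddCommGroup K]

/-- The reduced cost of an arc with respect to a potential `y`, for costs `c` on an arbitrary
type `A` of arcs, so that it applies to the arcs of a network and to residual arcs alike. -/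
def reducedCost (tail head : A → V) (c : A → K) (y : V → K) (a : A) : K :=
  c a - y (tail a) + y (head a)

variable {tail head : A → V} {c w : A → K} {y p : V → K} {a : A}

theorem reducedCost_add :
    reducedCost tail head c (y + p) a =
      reducedCost tail head (reducedCost tail head c y) p a := by
  simp only [reducedCost, Pi.add_apply]
  abel

theorem reducedCost_sub_reducedCost :
    reducedCost tail head w p a - reducedCost tail head c p a = w a - c a := by
  simp only [reducedCost]
  abel

theorem reducedCost_eq_slack_sub_slack {sL sU : K}
    (hdual : p (tail a) - p (head a) + sL - sU = w a) :
    reducedCost tail head w p a = sL - sU := by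
  rw [reducedCost, ← hdual]
  abel

variable [LinearOrder K] {δ : K}

theorem abs_reducedCost_sub_reducedCost_add_le (hw : |w a - reducedCost tail head c y a| ≤ δ) :
    |reducedCost tail head w p a - reducedCost tail head c (y + p) a| ≤ δ := by
  rwa [reducedCost_add, reducedCost_sub_reducedCost]

variable [IsOrderedAddMonoid K]

theorem neg_le_reducedCost_add (hw : |w a - reducedCost tail head c y a| ≤ δ)
    (hp : 0 ≤ reducedCost tail head w p a) : -δ ≤ reducedCost tail head c (y + p) a := by
  have hdiff := (abs_le.1 (abs_reducedCost_sub_reducedCost_add_le (p := p) hw)).2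
  exact neg_le_iff_add_nonneg.2 (hp.trans (sub_le_iff_le_add'.1 hdiff))

theorem reducedCost_add_le (hw : |w a - reducedCost tail head c y a| ≤ δ)
    (hp : reducedCost tail head w p a ≤ 0) : reducedCost tail head c (y + p) a ≤ δ := by
  have hdiff := (abs_le.1 (abs_reducedCost_sub_reducedCost_add_le (p := p) hw)).1
  exact (neg_le_sub_iff_le_add.1 hdiff).trans (add_le_of_nonpos_left hp)

end ReducedCost

section Residual

variable {V E R K : Type*}

/-- The reduced cost of a residual arc. Residual arcs are encoded in `E ⊕ E`: the arc `(e, +)` is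
`Sum.inl e`, the arc `(e, -)` is `Sum.inr e`, and `Sum.swap` reverses an arc. -/
def residualReducedCost [AddCommGroup K] (tail head : E → V) (c : E → K) (y : V → K) :
    E ⊕ E → K :=
  reducedCost (Sum.elim tail head) (Sum.elim head tail) (Sum.elim c (-c)) y

theorem residualReducedCost_swap [AddCommGroup K] (tail head : E → V) (c : E → K) (y : V → K)
    (a : E ⊕ E) :
    residualReducedCost tail head c y a.swap = -residualReducedCost tail head c y a := by
  rcases a with e | e <;>
    simp only [residualReducedCost, reducedCost, Sum.swap_inl, Sum.swap_inr, Sum.elim_inl,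
      Sum.elim_inr, Pi.neg_apply] <;>
    abel

/-- The residual capacity of an arc of `E ⊕ E` for the flow `f`; it is `0` on the arcs absent from
the residual graph of a feasible `f`. -/
def residualCapacity [Sub R] (u f : E → R) : E ⊕ E → R :=
  Sum.elim (u - f) f

/-- Membership of an arc of `E ⊕ E` in the residual graph of the flow `f`. -/
def IsResidual [LT R] [Zero R] (u f : E → R) : E ⊕ E → Prop :=
  Sum.elim (fun e => f e < u e) (fun e => 0 < f e)

/-- The flow obtained from `f` by pushing `Δ` along the residual arcs. -/
def augment [Add R] [Sub R] (f : E → R) (Δ : E ⊕ E → R) (e : E) : R :=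
  f e + Δ (.inl e) - Δ (.inr e)

/-- Flow conservation at every vertex. -/
def IsConserved [Fintype E] [DecidableEq V] [AddCommMonoid R] (tail head : E → V) (f : E → R) :
    Prop :=
  ∀ v, ∑ e with tail e = v, f e = ∑ e with head e = v, f e

/-- A circulation that is feasible for the capacities `u`. -/
def IsCirculation [Fintype E] [DecidableEq V] [AddCommMonoid R] [LE R] (tail head : E → V)
    (u f : E → R) : Prop :=
  (∀ e, 0 ≤ f e ∧ f e ≤ u e) ∧ IsConserved tail head f

variable [AddCommGroup R]

theorem residualCapacity_augment (u f : E → R) (Δ : E ⊕ E → R) (a : E ⊕ E) :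
    residualCapacity u (augment f Δ) a = residualCapacity u f a - Δ a + Δ a.swap := by
  rcases a with e | e <;>
    simp only [residualCapacity, augment, Sum.swap_inl, Sum.swap_inr, Sum.elim_inl, Sum.elim_inr,
      Pi.sub_apply] <;>
    abel

theorem isConserved_augment [Fintype E] [DecidableEq V] {tail head : E → V} {f : E → R}
    {Δ : E ⊕ E → R} (hf : IsConserved tail head f)
    (hΔ : IsConserved tail head fun e => Δ (.inl e) - Δ (.inr e)) :
    IsConserved tail head (augment f Δ) := fun v => by
  simp only [augment, add_sub_assoc, sum_add_distrib, hf v, hΔ v]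

variable [LinearOrder R] [IsOrderedAddMonoid R] {u f : E → R} {Δ : E ⊕ E → R} {a : E ⊕ E}

theorem isResidual_iff_residualCapacity_pos : IsResidual u f a ↔ 0 < residualCapacity u f a := by
  rcases a with e | e
  · exact sub_pos.symm
  · exact Iff.rfl

theorem IsResidual.lt_residualCapacity_or_pos_swap (ha : IsResidual u (augment f Δ) a) :
    Δ a < residualCapacity u f a ∨ 0 < Δ a.swap := by
  rw [isResidual_iff_residualCapacity_pos, residualCapacity_augment] at ha
  rw [← add_zero 0] at ha
  exact (lt_or_lt_of_add_lt_add ha).imp_left sub_pos.1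

theorem isCirculation_augment [Fintype E] [DecidableEq V] {tail head : E → V}
    (hf : IsCirculation tail head u f) (hΔ : ∀ a, 0 ≤ Δ a ∧ Δ a ≤ residualCapacity u f a)
    (hΔcons : IsConserved tail head fun e => Δ (.inl e) - Δ (.inr e)) :
    IsCirculation tail head u (augment f Δ) := by
  have hcap_nonneg (a : E ⊕ E) : 0 ≤ residualCapacity u (augment f Δ) a := by
    rw [residualCapacity_augment]
    exact add_nonneg (sub_nonneg.2 (hΔ a).2) (hΔ a.swap).1
  exact ⟨fun e => ⟨hcap_nonneg (.inr e), sub_nonneg.1 (hcap_nonneg (.inl e))⟩,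
    isConserved_augment hf.2 hΔcons⟩

end Residual

theorem stmt15_general {V E R K : Type*} [Fintype E] [DecidableEq V]
    [AddCommGroup R] [LinearOrder R] [IsOrderedAddMonoid R]
    [AddCommGroup K] [LinearOrder K] [IsOrderedAddMonoid K]
    {tail head : E → V} {u f : E → R} {c : E → K} {y Δy : V → K} {δ : K}
    {w sL sU : E ⊕ E → K} {Δ : E ⊕ E → R}
    (hf : IsCirculation tail head u f)
    (hw : ∀ a, IsResidual u f a → |w a - residualReducedCost tail head c y a| ≤ δ)
    (hΔ : ∀ a, 0 ≤ Δ a ∧ Δ a ≤ residualCapacity u f a)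
    (hΔcons : IsConserved tail head fun e => Δ (.inl e) - Δ (.inr e))
    (hs : ∀ a, IsResidual u f a → 0 ≤ sL a ∧ 0 ≤ sU a)
    (hdual : ∀ a, IsResidual u f a →
      Δy (Sum.elim tail head a) - Δy (Sum.elim head tail a) + sL a - sU a = w a)
    (hcs : ∀ a, IsResidual u f a →
      (Δ a < residualCapacity u f a → sU a = 0) ∧ (0 < Δ a → sL a = 0)) :
    IsCirculation tail head u (augment f Δ) ∧
      ∀ a, IsResidual u (augment f Δ) a → -δ ≤ residualReducedCost tail head c (y + Δy) a := by
  refine ⟨isCirculation_augment hf hΔ hΔcons, fun a ha => ?_⟩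
  rcases ha.lt_residualCapacity_or_pos_swap with hlt | hpos
  · have hres : IsResidual u f a :=
      isResidual_iff_residualCapacity_pos.2 ((hΔ a).1.trans_lt hlt)
    refine neg_le_reducedCost_add (hw a hres) ?_
    rw [reducedCost_eq_slack_sub_slack (hdual a hres), (hcs a hres).1 hlt, sub_zero]
    exact (hs a hres).1
  · have hres : IsResidual u f a.swap :=
      isResidual_iff_residualCapacity_pos.2 (hpos.trans_le (hΔ a.swap).2)
    rw [neg_le, ← residualReducedCost_swap]
    refine reducedCost_add_le (hw a.swap hres) ?_
    rw [reducedCost_eq_slack_sub_slack (hdual a.swap hres), (hcs a.swap hres).2 hpos, zero_sub]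
    exact neg_nonpos.2 (hs a.swap hres).2

theorem div_pow_lt_half {K : Type*} [Field K] [LinearOrder K] [IsStrictOrderedRing K]
    {ε b : K} {k : ℕ} (hε : 0 < ε) (hb : 2 ≤ b) (hk : 1 < k) : ε / b ^ k < ε / 2 := by
  have hlt : 2 < b ^ k := hb.trans_lt (lt_self_pow₀ (one_lt_two.trans_le hb) hk)
  exact div_lt_div_of_pos_left hε two_pos hlt

/-- one cost-scaling step halves the optimality parameter: augmenting
an `ε`-optimal integral circulation `f` by an optimal primal-dual pair for the instance
with reduced costs rounded to multiples of `ε/m⁸` yields a feasible integral circulation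
`f'` all of whose residual arcs have reduced cost at least `-ε/m⁸` with respect to
`y + Δy`; in particular `f'` is `(ε/2)`-optimal.  Forward and backward residual arcs of
an edge `e` are indexed by `(e,+)` and `(e,-)`; quantities on absent residual arcs are
forced to `0` by the capacity constraints. -/
theorem stmt15
    {V E : Type} [Fintype V] [Fintype E] [DecidableEq V]
    (tail head : E → V)
    (m : ℕ) (hmcard : m = Fintype.card E) (hm : 2 ≤ m)
    (u c : E → ℤ) (hu : ∀ e, 1 ≤ u e)
    (ε : ℝ) (hε : 0 < ε)
    (f : E → ℤ)
    (hfcap : ∀ e, 0 ≤ f e ∧ f e ≤ u e)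
    (hfcons : ∀ v, (∑ e ∈ univ.filter (fun e => tail e = v), f e)
      = ∑ e ∈ univ.filter (fun e => head e = v), f e)
    (y : V → ℝ)
    (hoptFwd : ∀ e, f e < u e → -ε < (c e : ℝ) - y (tail e) + y (head e))
    (hoptBwd : ∀ e, 0 < f e → -ε < -(c e : ℝ) - y (head e) + y (tail e))
    (ctp ctm : E → ℝ)
    (hctp : ∀ e, f e < u e → (∃ z : ℤ, ctp e = z * (ε / (m : ℝ) ^ 8)) ∧
      |ctp e - ((c e : ℝ) - y (tail e) + y (head e))| ≤ ε / (m : ℝ) ^ 8)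
    (hctm : ∀ e, 0 < f e → (∃ z : ℤ, ctm e = z * (ε / (m : ℝ) ^ 8)) ∧
      |ctm e - (-(c e : ℝ) - y (head e) + y (tail e))| ≤ ε / (m : ℝ) ^ 8)
    (Δp Δm : E → ℤ)
    (hΔcap : ∀ e, 0 ≤ Δp e ∧ Δp e ≤ u e - f e ∧ 0 ≤ Δm e ∧ Δm e ≤ f e ∧
      Δp e * Δm e = 0)
    (hΔcons : ∀ v, (∑ e ∈ univ.filter (fun e => tail e = v), (Δp e - Δm e))
      = ∑ e ∈ univ.filter (fun e => head e = v), (Δp e - Δm e))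
    (Δy : V → ℝ) (sLp sLm sUp sUm : E → ℝ)
    (hs : ∀ e, 0 ≤ sLp e ∧ 0 ≤ sLm e ∧ 0 ≤ sUp e ∧ 0 ≤ sUm e)
    (hdualFwd : ∀ e, f e < u e → Δy (tail e) - Δy (head e) + sLp e - sUp e = ctp e)
    (hdualBwd : ∀ e, 0 < f e → Δy (head e) - Δy (tail e) + sLm e - sUm e = ctm e)
    (hcsFwd : ∀ e, f e < u e →
      (Δp e < u e - f e → sUp e = 0) ∧ (0 < Δp e → sLp e = 0))
    (hcsBwd : ∀ e, 0 < f e →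
      (Δm e < f e → sUm e = 0) ∧ (0 < Δm e → sLm e = 0)) :
    let f' : E → ℤ := fun e => f e + Δp e - Δm e
    ((∀ e, 0 ≤ f' e ∧ f' e ≤ u e) ∧
      ∀ v, (∑ e ∈ univ.filter (fun e => tail e = v), f' e)
        = ∑ e ∈ univ.filter (fun e => head e = v), f' e) ∧
      (∀ e, f' e < u e →
        -(ε / (m : ℝ) ^ 8) ≤
          (c e : ℝ) - (y (tail e) + Δy (tail e)) + (y (head e) + Δy (head e))) ∧
      (∀ e, 0 < f' e →
        -(ε / (m : ℝ) ^ 8) ≤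
          -(c e : ℝ) - (y (head e) + Δy (head e)) + (y (tail e) + Δy (tail e))) ∧
      (∃ y' : V → ℝ,
        (∀ e, f' e < u e → -(ε / 2) < (c e : ℝ) - y' (tail e) + y' (head e)) ∧
          ∀ e, 0 < f' e → -(ε / 2) < -(c e : ℝ) - y' (head e) + y' (tail e)) := by
  intro f'
  have hδ : ε / (m : ℝ) ^ 8 < ε / 2 := div_pow_lt_half hε (mod_cast hm) (by norm_num)
  obtain ⟨hcirc, hred⟩ := stmt15_general (y := y) (c := fun e => (c e : ℝ)) (Δy := Δy)
    (Δ := Sum.elim Δp Δm) (w := Sum.elim ctp ctm) (sL := Sum.elim sLp sLm)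
    (sU := Sum.elim sUp sUm) ⟨hfcap, hfcons⟩
    (Sum.forall.2 ⟨fun e he => (hctp e he).2, fun e he => (hctm e he).2⟩)
    (Sum.forall.2 ⟨fun e => ⟨(hΔcap e).1, (hΔcap e).2.1⟩,
      fun e => ⟨(hΔcap e).2.2.1, (hΔcap e).2.2.2.1⟩⟩)
    hΔcons
    (Sum.forall.2 ⟨fun e _ => ⟨(hs e).1, (hs e).2.2.1⟩, fun e _ => ⟨(hs e).2.1, (hs e).2.2.2⟩⟩)
    (Sum.forall.2 ⟨hdualFwd, hdualBwd⟩) (Sum.forall.2 ⟨hcsFwd, hcsBwd⟩)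
  exact ⟨hcirc, fun e => hred (.inl e), fun e => hred (.inr e), y + Δy,
    fun e he => (neg_lt_neg hδ).trans_le (hred (.inl e) he),
    fun e he => (neg_lt_neg hδ).trans_le (hred (.inr e) he)⟩
end

section
/- (Derivatives of a partially minimized bivariate function.) Let X ⊆ ℝ² be open and ψ : X → ℝ three times continuously differentiable. Let I ⊆ ℝ be open and y : I → ℝ twice continuously differentiable with (x, y(x)) ∈ X for all x ∈ I and ψ_y(x, y(x)) = 0 for all x ∈ I, where ψ_y denotes the partial derivative of ψ in its second argument. Define ζ(x) := ψ(x, y(x)) and v(x) := (1, y′(x)) ∈ ℝ². Then for all x ∈ I: ζ′(x) = ψ_x(x, y(x)); ζ″(x) = v(x)^⊤ ∇²ψ(x, y(x)) v(x); ζ‴(x) = ∇³ψ(x, y(x))[v(x), v(x), v(x)]; and moreover, if ψ_{yy}(x, y(x)) ≠ 0, then y′(x) = −ψ_{xy}(x, y(x)) / ψ_{yy}(x, y(x)). -/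
noncomputable section

/- The partial derivative `∂ψ/∂y` vanishes along the graph of `y`. Differentiating this identity
along the graph shows that the Hessian of `ψ` annihilates every pair of a vector tangent to the
graph and a vertical vector. For `ζ x = ψ (x, y x)`, the vertical part of the tangent vector is
invisible to the gradient, so the first derivative of `ζ` is `∂ψ/∂x`. Differentiating it pairs a
tangent with a horizontal vector, which the Hessian does not distinguish from the pair of tangent
vectors. In the third derivative, the second derivative of `y` occurs only in a vertical vector
paired with a tangent one through the Hessian, hence not at all. -/

open ContinuousLinearMap Filter
open scoped ContDiff Topology

section Graph

variable {𝕜 : Type*} [NontriviallyNormedField 𝕜]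
  {E : Type*} [NormedAddCommGroup E] [NormedSpace 𝕜 E]
  {F : Type*} [NormedAddCommGroup F] [NormedSpace 𝕜 F]
  {G : Type*} [NormedAddCommGroup G] [NormedSpace 𝕜 G]
  {ψ : E × F → G} {y : E → F} {x : E}

theorem iteratedFDeriv_three_apply (f : E → F) (x : E) (m : Fin 3 → E) :
    iteratedFDeriv 𝕜 3 f x m = fderiv 𝕜 (fderiv 𝕜 (fderiv 𝕜 f)) x (m 0) (m 1) (m 2) := by
  rw [iteratedFDeriv_succ_apply_right, iteratedFDeriv_two_apply]
  rfl

theorem fderiv_apply_const {f : E → F →L[𝕜] G} (hf : DifferentiableAt 𝕜 f x) (u : E) (v : F) :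
    fderiv 𝕜 (fun s ↦ f s v) x u = fderiv 𝕜 f x u v := by
  simp [fderiv_clm_apply hf (differentiableAt_const v)]

theorem differentiableAt_fderiv_of_contDiffAt_two {f : E → F} (hf : ContDiffAt 𝕜 2 f x) :
    DifferentiableAt 𝕜 (fderiv 𝕜 f) x :=
  (hf.fderiv_right (m := 1) (by norm_num)).differentiableAt one_ne_zero

variable (𝕜) in
/-- The tangent map `u ↦ (u, y'(x) u)` of the graph parametrization `s ↦ (s, y s)` at `x`. For
`E = 𝕜` its value at `1` is the vector `v(x) = (1, y'(x))`. -/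
def graphTangent (y : E → F) (x : E) : E →L[𝕜] E × F :=
  (ContinuousLinearMap.id 𝕜 E).prod (fderiv 𝕜 y x)

variable (𝕜) in
/-- The point `y x` is critical for the partial function `ψ (x, ·)`: the derivative of `ψ` at
`(x, y x)` vanishes on vertical vectors. -/
def IsPartialCriticalAt (ψ : E × F → G) (y : E → F) (x : E) : Prop :=
  fderiv 𝕜 ψ (x, y x) ∘L inr 𝕜 E F = 0

theorem graphTangent_apply (u : E) : graphTangent 𝕜 y x u = (u, fderiv 𝕜 y x u) := rfl

theorem graphTangent_apply_eq_add (u : E) :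
    graphTangent 𝕜 y x u = (u, 0) + (0, fderiv 𝕜 y x u) := by
  simp [graphTangent_apply]

theorem IsPartialCriticalAt.fderiv_apply_eq_zero (h : IsPartialCriticalAt 𝕜 ψ y x) (w : F) :
    fderiv 𝕜 ψ (x, y x) (0, w) = 0 :=
  DFunLike.congr_fun h w

theorem hasFDerivAt_comp_graph (hψ : DifferentiableAt 𝕜 ψ (x, y x))
    (hy : DifferentiableAt 𝕜 y x) :
    HasFDerivAt (fun s ↦ ψ (s, y s)) (fderiv 𝕜 ψ (x, y x) ∘L graphTangent 𝕜 y x) x :=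
  HasFDerivAt.comp (f := fun s ↦ (s, y s)) x hψ.hasFDerivAt
    ((hasFDerivAt_id x).prodMk hy.hasFDerivAt)

theorem hasFDerivAt_graphTangent_apply (hy : DifferentiableAt 𝕜 (fderiv 𝕜 y) x) (u : E) :
    HasFDerivAt (fun s ↦ graphTangent 𝕜 y s u)
      (inr 𝕜 E F ∘L (fderiv 𝕜 (fderiv 𝕜 y) x).flip u) x := by
  have h := hy.hasFDerivAt.clm_apply (hasFDerivAt_const u x)
  rw [comp_zero, zero_add] at h
  exact (hasFDerivAt_const u x).prodMk h

theorem eventually_contDiffAt_graph {n : WithTop ℕ∞} (hn : n ≠ ∞)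
    (hψ : ContDiffAt 𝕜 n ψ (x, y x)) (hy : ContinuousAt y x) :
    ∀ᶠ s in 𝓝 x, ContDiffAt 𝕜 n ψ (s, y s) :=
  (continuousAt_id.prodMk hy).eventually (hψ.eventually hn)

theorem IsPartialCriticalAt.hasFDerivAt_comp_graph_inl (h : IsPartialCriticalAt 𝕜 ψ y x)
    (hψ : DifferentiableAt 𝕜 ψ (x, y x)) (hy : DifferentiableAt 𝕜 y x) :
    HasFDerivAt (fun s ↦ ψ (s, y s)) (fderiv 𝕜 ψ (x, y x) ∘L inl 𝕜 E F) x := by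
  convert hasFDerivAt_comp_graph hψ hy using 1
  ext u
  simp only [coe_comp, Function.comp_apply, inl_apply, graphTangent_apply_eq_add, map_add,
    h.fderiv_apply_eq_zero, add_zero]

theorem eventually_hasFDerivAt_comp_graph_inl (hψ : ContDiffAt 𝕜 1 ψ (x, y x))
    (hy : ContDiffAt 𝕜 1 y x) (hcrit : ∀ᶠ s in 𝓝 x, IsPartialCriticalAt 𝕜 ψ y s) :
    ∀ᶠ s in 𝓝 x,
      HasFDerivAt (fun t ↦ ψ (t, y t)) (fderiv 𝕜 ψ (s, y s) ∘L inl 𝕜 E F) s := by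
  filter_upwards [hcrit, eventually_contDiffAt_graph (by simp) hψ hy.continuousAt,
    hy.eventually (by simp)] with s hs hψs hys
  exact hs.hasFDerivAt_comp_graph_inl (hψs.differentiableAt one_ne_zero)
    (hys.differentiableAt one_ne_zero)

-- No derivative of `y` occurs in the first derivative, so `ψ (s, y s)` is as regular as `ψ`.
theorem contDiffAt_succ_comp_graph_of_critical {n : ℕ} (hn : 1 ≤ n)
    (hψ : ContDiffAt 𝕜 (n + 1) ψ (x, y x))
    (hy : ContDiffAt 𝕜 n y x) (hcrit : ∀ᶠ s in 𝓝 x, IsPartialCriticalAt 𝕜 ψ y s) :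
    ContDiffAt 𝕜 (n + 1) (fun s ↦ ψ (s, y s)) x := by
  have hζ' : ContDiffAt 𝕜 n (fun s ↦ fderiv 𝕜 ψ (s, y s) ∘L inl 𝕜 E F) x :=
    (ContDiffAt.comp (f := fun s ↦ (s, y s)) x hψ.fderiv_right_succ
      (contDiffAt_id.prodMk hy)).clm_comp contDiffAt_const
  have hev := eventually_hasFDerivAt_comp_graph_inl (hψ.of_le (by norm_cast; lia))
    (hy.of_le (by norm_cast)) hcrit
  exact contDiffAt_succ_iff_hasFDerivAt.2 ⟨_, ⟨_, hev, fun _ hs ↦ hs⟩, hζ'⟩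

theorem fderiv_fderiv_graphTangent_vertical (hψ : DifferentiableAt 𝕜 (fderiv 𝕜 ψ) (x, y x))
    (hy : DifferentiableAt 𝕜 y x) (hcrit : ∀ᶠ s in 𝓝 x, IsPartialCriticalAt 𝕜 ψ y s)
    (u : E) (w : F) :
    fderiv 𝕜 (fderiv 𝕜 ψ) (x, y x) (graphTangent 𝕜 y x u) (0, w) = 0 := by
  have hγ := hasFDerivAt_comp_graph hψ hy
  have hzero : (fun s ↦ fderiv 𝕜 ψ (s, y s) (0, w)) =ᶠ[𝓝 x] fun _ ↦ 0 :=
    hcrit.mono fun s hs ↦ hs.fderiv_apply_eq_zero w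
  calc fderiv 𝕜 (fderiv 𝕜 ψ) (x, y x) (graphTangent 𝕜 y x u) (0, w)
      = fderiv 𝕜 (fun s ↦ fderiv 𝕜 ψ (s, y s) (0, w)) x u := by
        rw [fderiv_apply_const hγ.differentiableAt, hγ.fderiv, comp_apply]
    _ = 0 := by rw [hzero.fderiv_eq, fderiv_const_apply, zero_apply]

theorem fderiv_fderiv_vertical_eq_neg (hψ : DifferentiableAt 𝕜 (fderiv 𝕜 ψ) (x, y x))
    (hy : DifferentiableAt 𝕜 y x) (hcrit : ∀ᶠ s in 𝓝 x, IsPartialCriticalAt 𝕜 ψ y s)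
    (u : E) (w : F) :
    fderiv 𝕜 (fderiv 𝕜 ψ) (x, y x) (0, fderiv 𝕜 y x u) (0, w) =
      -fderiv 𝕜 (fderiv 𝕜 ψ) (x, y x) (u, 0) (0, w) := by
  have h := fderiv_fderiv_graphTangent_vertical hψ hy hcrit u w
  rw [graphTangent_apply_eq_add, map_add, add_apply] at h
  exact eq_neg_of_add_eq_zero_right h

theorem fderiv_fderiv_comp_graph (hψ : ContDiffAt 𝕜 2 ψ (x, y x)) (hy : ContDiffAt 𝕜 1 y x)
    (hcrit : ∀ᶠ s in 𝓝 x, IsPartialCriticalAt 𝕜 ψ y s) (u v : E) :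
    fderiv 𝕜 (fderiv 𝕜 fun s ↦ ψ (s, y s)) x u v =
      fderiv 𝕜 (fderiv 𝕜 ψ) (x, y x) (graphTangent 𝕜 y x u) (graphTangent 𝕜 y x v) := by
  have hψ' := differentiableAt_fderiv_of_contDiffAt_two hψ
  have hy' : DifferentiableAt 𝕜 y x := hy.differentiableAt one_ne_zero
  have hγ := hasFDerivAt_comp_graph hψ' hy'
  have hζ' : fderiv 𝕜 (fun s ↦ ψ (s, y s)) =ᶠ[𝓝 x] fun s ↦ fderiv 𝕜 ψ (s, y s) ∘L inl 𝕜 E F :=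
    (eventually_hasFDerivAt_comp_graph_inl (hψ.of_le one_le_two) hy hcrit).mono fun _ hs ↦ hs.fderiv
  have hζ'_diff : DifferentiableAt 𝕜 (fderiv 𝕜 fun s ↦ ψ (s, y s)) x :=
    hζ'.differentiableAt_iff.2 (hγ.differentiableAt.clm_comp (differentiableAt_const _))
  have hζ'_apply : (fun s ↦ fderiv 𝕜 (fun t ↦ ψ (t, y t)) s v) =ᶠ[𝓝 x]
      fun s ↦ fderiv 𝕜 ψ (s, y s) (v, 0) :=
    hζ'.mono fun _ hs ↦ DFunLike.congr_fun hs v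
  calc fderiv 𝕜 (fderiv 𝕜 fun s ↦ ψ (s, y s)) x u v
      = fderiv 𝕜 (fun s ↦ fderiv 𝕜 ψ (s, y s) (v, 0)) x u := by
        rw [← fderiv_apply_const hζ'_diff, hζ'_apply.fderiv_eq]
    _ = fderiv 𝕜 (fderiv 𝕜 ψ) (x, y x) (graphTangent 𝕜 y x u) (v, 0) := by
        rw [fderiv_apply_const hγ.differentiableAt, hγ.fderiv, comp_apply]
    _ = fderiv 𝕜 (fderiv 𝕜 ψ) (x, y x) (graphTangent 𝕜 y x u) (graphTangent 𝕜 y x v) := by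
        rw [graphTangent_apply_eq_add v, map_add,
          fderiv_fderiv_graphTangent_vertical hψ' hy' hcrit, add_zero]

theorem fderiv_apply_graphTangent_graphTangent {B : E × F → E × F →L[𝕜] E × F →L[𝕜] G}
    (hB : DifferentiableAt 𝕜 B (x, y x)) (hy : DifferentiableAt 𝕜 y x)
    (hy' : DifferentiableAt 𝕜 (fderiv 𝕜 y) x) (u v w : E) :
    fderiv 𝕜 (fun s ↦ B (s, y s) (graphTangent 𝕜 y s v) (graphTangent 𝕜 y s w)) x u =
      fderiv 𝕜 B (x, y x) (graphTangent 𝕜 y x u) (graphTangent 𝕜 y x v) (graphTangent 𝕜 y x w) +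
        B (x, y x) (0, fderiv 𝕜 (fderiv 𝕜 y) x u v) (graphTangent 𝕜 y x w) +
        B (x, y x) (graphTangent 𝕜 y x v) (0, fderiv 𝕜 (fderiv 𝕜 y) x u w) := by
  have hBγ := hasFDerivAt_comp_graph (ψ := B) hB hy
  have hBv := hBγ.clm_apply (hasFDerivAt_graphTangent_apply hy' v)
  rw [(hBv.clm_apply (hasFDerivAt_graphTangent_apply hy' w)).fderiv]
  simp only [add_apply, comp_apply, flip_apply, inr_apply]
  abel

theorem fderiv_fderiv_fderiv_comp_graph [IsRCLikeNormedField 𝕜]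
    (hψ : ContDiffAt 𝕜 3 ψ (x, y x)) (hy : ContDiffAt 𝕜 2 y x)
    (hcrit : ∀ᶠ s in 𝓝 x, IsPartialCriticalAt 𝕜 ψ y s) (u v w : E) :
    fderiv 𝕜 (fderiv 𝕜 (fderiv 𝕜 fun s ↦ ψ (s, y s))) x u v w =
      fderiv 𝕜 (fderiv 𝕜 (fderiv 𝕜 ψ)) (x, y x) (graphTangent 𝕜 y x u)
        (graphTangent 𝕜 y x v) (graphTangent 𝕜 y x w) := by
  have hψ₂ : ContDiffAt 𝕜 2 ψ (x, y x) := hψ.of_le (by norm_num)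
  have hy₁ : ContDiffAt 𝕜 1 y x := hy.of_le one_le_two
  have hy_diff : DifferentiableAt 𝕜 y x := hy₁.differentiableAt one_ne_zero
  have hψ'' : DifferentiableAt 𝕜 (fderiv 𝕜 (fderiv 𝕜 ψ)) (x, y x) :=
    differentiableAt_fderiv_of_contDiffAt_two (hψ.fderiv_right (by norm_num))
  have hζ : ContDiffAt 𝕜 (2 + 1) (fun s ↦ ψ (s, y s)) x :=
    contDiffAt_succ_comp_graph_of_critical (n := 2) one_le_two (by exact_mod_cast hψ) hy hcrit
  have hζ'' : DifferentiableAt 𝕜 (fderiv 𝕜 (fderiv 𝕜 fun s ↦ ψ (s, y s))) x :=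
    differentiableAt_fderiv_of_contDiffAt_two hζ.fderiv_right_succ
  have hζ''_apply : (fun s ↦ fderiv 𝕜 (fderiv 𝕜 fun t ↦ ψ (t, y t)) s v w) =ᶠ[𝓝 x]
      fun s ↦ fderiv 𝕜 (fderiv 𝕜 ψ) (s, y s) (graphTangent 𝕜 y s v) (graphTangent 𝕜 y s w) := by
    filter_upwards [eventually_contDiffAt_graph (by simp) hψ₂ hy.continuousAt,
      hy₁.eventually (by simp), hcrit.eventually_nhds] with s hψs hys hs
    exact fderiv_fderiv_comp_graph hψs hys hs v w
  have hsymm : IsSymmSndFDerivAt 𝕜 ψ (x, y x) := hψ₂.isSymmSndFDerivAt (by simp)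
  have hvert := fderiv_fderiv_graphTangent_vertical
    (differentiableAt_fderiv_of_contDiffAt_two hψ₂) hy_diff hcrit
  calc fderiv 𝕜 (fderiv 𝕜 (fderiv 𝕜 fun s ↦ ψ (s, y s))) x u v w
      = fderiv 𝕜 (fun s ↦ fderiv 𝕜 (fderiv 𝕜 ψ) (s, y s) (graphTangent 𝕜 y s v)
          (graphTangent 𝕜 y s w)) x u := by
        rw [← fderiv_apply_const hζ'',
          ← fderiv_apply_const (hζ''.clm_apply (differentiableAt_const v)), hζ''_apply.fderiv_eq]
    _ = fderiv 𝕜 (fderiv 𝕜 (fderiv 𝕜 ψ)) (x, y x) (graphTangent 𝕜 y x u)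
          (graphTangent 𝕜 y x v) (graphTangent 𝕜 y x w) := by
        rw [fderiv_apply_graphTangent_graphTangent hψ'' hy_diff
          (differentiableAt_fderiv_of_contDiffAt_two hy), hsymm.eq (0, _), hvert, hvert, add_zero,
          add_zero]

end Graph

section Scalar

variable {𝕜 : Type*} [NontriviallyNormedField 𝕜]
  {E : Type*} [NormedAddCommGroup E] [NormedSpace 𝕜 E]
  {G : Type*} [NormedAddCommGroup G] [NormedSpace 𝕜 G]
  {ζ : 𝕜 → G} {x : 𝕜} {L : 𝕜 →L[𝕜] E}

theorem iteratedDeriv_eq_of_iteratedFDeriv_eq_comp {n : ℕ} {A : E [×n]→L[𝕜] G}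
    (h : iteratedFDeriv 𝕜 n ζ x = A.compContinuousLinearMap fun _ ↦ L) :
    iteratedDeriv n ζ x = A fun _ ↦ L 1 := by
  rw [iteratedDeriv_eq_iteratedFDeriv, h]
  rfl

theorem deriv_deriv_eq_of_iteratedFDeriv_eq_comp {A : E [×2]→L[𝕜] G}
    (h : iteratedFDeriv 𝕜 2 ζ x = A.compContinuousLinearMap fun _ ↦ L) :
    deriv (deriv ζ) x = A ![L 1, L 1] := by
  rw [← iteratedDeriv_one (f := ζ), ← iteratedDeriv_succ,
    iteratedDeriv_eq_of_iteratedFDeriv_eq_comp h]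
  congr 1
  ext i
  fin_cases i <;> rfl

theorem deriv_deriv_deriv_eq_of_iteratedFDeriv_eq_comp {A : E [×3]→L[𝕜] G}
    (h : iteratedFDeriv 𝕜 3 ζ x = A.compContinuousLinearMap fun _ ↦ L) :
    deriv (deriv (deriv ζ)) x = A ![L 1, L 1, L 1] := by
  rw [← iteratedDeriv_one (f := ζ), ← iteratedDeriv_succ, ← iteratedDeriv_succ,
    iteratedDeriv_eq_of_iteratedFDeriv_eq_comp h]
  congr 1
  ext i
  fin_cases i <;> rfl

theorem eq_neg_iteratedFDeriv_div_of_fderiv_fderiv {ψ : 𝕜 × 𝕜 → 𝕜} {p : 𝕜 × 𝕜} {a : 𝕜}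
    (h : fderiv 𝕜 (fderiv 𝕜 ψ) p (0, a) (0, 1) = -fderiv 𝕜 (fderiv 𝕜 ψ) p (1, 0) (0, 1))
    (hne : iteratedFDeriv 𝕜 2 ψ p ![(0, 1), (0, 1)] ≠ 0) :
    a = -iteratedFDeriv 𝕜 2 ψ p ![(1, 0), (0, 1)] / iteratedFDeriv 𝕜 2 ψ p ![(0, 1), (0, 1)] := by
  have ha : ((0, a) : 𝕜 × 𝕜) = a • (0, 1) := by simp
  rw [ha, map_smul, smul_apply, smul_eq_mul] at h
  rw [eq_div_iff hne]
  simpa only [iteratedFDeriv_two_apply, Matrix.cons_val_zero, Matrix.cons_val_one] using h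

end Scalar

theorem stmt17_general {𝕜 : Type*} [NontriviallyNormedField 𝕜] [IsRCLikeNormedField 𝕜]
    {E : Type*} [NormedAddCommGroup E] [NormedSpace 𝕜 E]
    {F : Type*} [NormedAddCommGroup F] [NormedSpace 𝕜 F]
    {G : Type*} [NormedAddCommGroup G] [NormedSpace 𝕜 G]
    {ψ : E × F → G} {y : E → F} {x : E}
    (hψ : ContDiffAt 𝕜 3 ψ (x, y x)) (hy : ContDiffAt 𝕜 2 y x)
    (hcrit : ∀ᶠ s in 𝓝 x, IsPartialCriticalAt 𝕜 ψ y s) :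
    fderiv 𝕜 (fun s ↦ ψ (s, y s)) x = fderiv 𝕜 ψ (x, y x) ∘L inl 𝕜 E F ∧
      iteratedFDeriv 𝕜 2 (fun s ↦ ψ (s, y s)) x =
        (iteratedFDeriv 𝕜 2 ψ (x, y x)).compContinuousLinearMap
          (fun _ ↦ graphTangent 𝕜 y x) ∧
      iteratedFDeriv 𝕜 3 (fun s ↦ ψ (s, y s)) x =
        (iteratedFDeriv 𝕜 3 ψ (x, y x)).compContinuousLinearMap
          (fun _ ↦ graphTangent 𝕜 y x) ∧
      ∀ u w, fderiv 𝕜 (fderiv 𝕜 ψ) (x, y x) (0, fderiv 𝕜 y x u) (0, w) =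
        -fderiv 𝕜 (fderiv 𝕜 ψ) (x, y x) (u, 0) (0, w) := by
  have hψ₂ : ContDiffAt 𝕜 2 ψ (x, y x) := hψ.of_le (by norm_num)
  have hy₁ : ContDiffAt 𝕜 1 y x := hy.of_le one_le_two
  refine ⟨?_, ?_, ?_, fderiv_fderiv_vertical_eq_neg
    (differentiableAt_fderiv_of_contDiffAt_two hψ₂) (hy₁.differentiableAt one_ne_zero) hcrit⟩
  · exact (eventually_hasFDerivAt_comp_graph_inl (hψ₂.of_le one_le_two) hy₁
      hcrit).self_of_nhds.fderiv
  · ext m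
    simp [iteratedFDeriv_two_apply, fderiv_fderiv_comp_graph hψ₂ hy₁ hcrit]
  · ext m
    simp [iteratedFDeriv_three_apply, fderiv_fderiv_fderiv_comp_graph hψ hy hcrit]

/-- derivatives of a partially minimized bivariate function: if
`ψ : ℝ² → ℝ` is `C³` on an open set `X`, `y : ℝ → ℝ` is `C²` on an open set `I` with
`(x, y x) ∈ X` and `ψ_y(x, y x) = 0` on `I`, then the derivatives of
`ζ x = ψ (x, y x)` are given by the stated formulas with `v x = (1, y' x)`; moreover
`y' x = -ψ_{xy}/ψ_{yy}` whenever `ψ_{yy}(x, y x) ≠ 0`. -/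
theorem stmt17
    (X : Set (ℝ × ℝ)) (hX : IsOpen X)
    (ψ : ℝ × ℝ → ℝ) (hψ : ContDiffOn ℝ 3 ψ X)
    (I : Set ℝ) (hI : IsOpen I)
    (y : ℝ → ℝ) (hy : ContDiffOn ℝ 2 y I)
    (hmem : ∀ x ∈ I, (x, y x) ∈ X)
    (hcrit : ∀ x ∈ I, fderiv ℝ ψ (x, y x) (0, 1) = 0) :
    ∀ x ∈ I,
      deriv (fun s => ψ (s, y s)) x = fderiv ℝ ψ (x, y x) (1, 0) ∧
        deriv (deriv fun s => ψ (s, y s)) x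
          = iteratedFDeriv ℝ 2 ψ (x, y x) ![(1, deriv y x), (1, deriv y x)] ∧
        deriv (deriv (deriv fun s => ψ (s, y s))) x
          = iteratedFDeriv ℝ 3 ψ (x, y x)
              ![(1, deriv y x), (1, deriv y x), (1, deriv y x)] ∧
        (iteratedFDeriv ℝ 2 ψ (x, y x) ![((0 : ℝ), (1 : ℝ)), ((0 : ℝ), (1 : ℝ))] ≠ 0 →
          deriv y x =
            -(iteratedFDeriv ℝ 2 ψ (x, y x) ![((1 : ℝ), (0 : ℝ)), ((0 : ℝ), (1 : ℝ))])
              / iteratedFDeriv ℝ 2 ψ (x, y x) ![((0 : ℝ), (1 : ℝ)), ((0 : ℝ), (1 : ℝ))]) := by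
  intro x hx
  obtain ⟨h₁, h₂, h₃, h₄⟩ := stmt17_general (hψ.contDiffAt (hX.mem_nhds (hmem x hx)))
    (hy.contDiffAt (hI.mem_nhds hx)) ((hI.eventually_mem hx).mono fun s hs ↦ ext_ring (hcrit s hs))
  exact ⟨DFunLike.congr_fun h₁ 1, deriv_deriv_eq_of_iteratedFDeriv_eq_comp h₂,
    deriv_deriv_deriv_eq_of_iteratedFDeriv_eq_comp h₃,
    eq_neg_iteratedFDeriv_div_of_fderiv_fderiv (h₄ 1 1)⟩
end
end

section
/- (Stability of lengths and gradients for self-concordant edge costs.) Let E be a finite index set and α ∈ (0, 1/2]. For each e ∈ E, let ζ_e : I_e → ℝ be three times continuously differentiable on an open interval I_e with ζ_e″ > 0 on I_e, and suppose 4·α^{−1}·ζ_e is self-concordant on I_e. Define, for f with f_e ∈ I_e for all e, the lengths ℓ(f)_e := (α^{−1}·ζ_e″(f_e))^{1/2} and gradients g(f)_e := ζ_e′(f_e), and L(f) := diag(ℓ(f)). Let f, f̄ with f_e, f̄_e ∈ I_e for all e satisfy ‖L(f)(f − f̄)‖_∞ ≤ ε for some ε ∈ (0, 1/1000). Then for every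 e ∈ E: ℓ(f)_e ≈_{1+5ε} ℓ(f̄)_e, and |g(f)_e − g(f̄)_e| ≤ ε·ℓ(f)_e (i.e. ‖L(f)^{−1}(g(f) − g(f̄))‖_∞ ≤ ε). -/
noncomputable section

/-!
If `h` is self-concordant with `h'' > 0`, then the derivative of `1 / √h''` is
`-h''' / (2 h''^{3/2})`, which has absolute value at most `1`; hence `1 / √h''` is `1`-Lipschitz.
If `√(h'' x) |y - x| ≤ r`, this gives `(1 - r) √(h'' y) ≤ √(h'' x) ≤ (1 + r) √(h'' y)`, and
integrating `h'' z ≤ h'' x / (1 - √(h'' x) |z - x|)²` from `x` to `y` gives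
`|h' y - h' x| ≤ √(h'' x) r / (1 - r)`. For `h = 4 α⁻¹ ζ` one has `√h'' = 2 ℓ`, so `r = 2 ε`.
-/

theorem deriv_deriv_const_mul (c : ℝ) (g : ℝ → ℝ) (x : ℝ) :
    deriv (deriv fun s => c * g s) x = c * deriv (deriv g) x := by
  rw [deriv_const_mul_field', deriv_const_mul_field]

theorem hasDerivAt_inv_sqrt_comp {w : ℝ → ℝ} {w' x : ℝ} (hw : HasDerivAt w w' x)
    (hx : 0 < w x) : HasDerivAt (fun y => (√(w y))⁻¹) (-w' / (2 * √(w x) ^ 3)) x := by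
  have hsqrt : √(w x) ≠ 0 := (Real.sqrt_pos.2 hx).ne'
  refine ((hw.sqrt hx.ne').inv hsqrt).congr_deriv ?_
  field_simp

theorem hasDerivAt_mul_inv_one_sub_mul {u t : ℝ} (ht : 1 - u * t ≠ 0) :
    HasDerivAt (fun τ => u * (1 - u * τ)⁻¹) (u ^ 2 / (1 - u * t) ^ 2) t := by
  have hlin : HasDerivAt (fun τ => 1 - u * τ) (-u) t := by
    simpa using ((hasDerivAt_id t).const_mul u).const_sub 1
  refine ((hlin.inv ht).const_mul u).congr_deriv ?_
  ring

theorem one_sub_mul_le_and_le_one_add_mul_of_abs_inv_sub_inv_le {u v r : ℝ} (hu : 0 < u)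
    (hv : 0 < v) (huv : u * |v⁻¹ - u⁻¹| ≤ r) : (1 - r) * v ≤ u ∧ u ≤ (1 + r) * v := by
  have hratio : |u / v - 1| ≤ r := by
    calc |u / v - 1| = |u * (v⁻¹ - u⁻¹)| := by congr 1; field_simp
      _ = u * |v⁻¹ - u⁻¹| := by rw [abs_mul, abs_of_pos hu]
      _ ≤ r := huv
  obtain ⟨hlower, hupper⟩ := abs_le.1 hratio
  exact ⟨(le_div_iff₀ hv).1 (by linarith), (div_le_iff₀ hv).1 (by linarith)⟩

theorem norm_image_sub_le_of_norm_deriv_le_deriv_dist {F : Type*} [NormedAddCommGroup F]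
    [NormedSpace ℝ F] {g g' : ℝ → F} {B B' : ℝ → ℝ} {x y : ℝ}
    (hg : ∀ z ∈ segment ℝ x y, HasDerivAt g (g' z) z)
    (hB : ∀ t ∈ Set.Icc 0 |y - x|, HasDerivAt B (B' t) t)
    (hbound : ∀ z ∈ segment ℝ x y, ‖g' z‖ ≤ B' |z - x|) :
    ‖g y - g x‖ ≤ B |y - x| - B 0 := by
  let p : ℝ → ℝ := AffineMap.lineMap x y
  have hp : ∀ t ∈ Set.Icc (0 : ℝ) 1, p t ∈ segment ℝ x y ∧ |p t - x| = |y - x| * t := by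
    intro t ht
    refine ⟨lineMap_mem_segment ℝ x y ht, ?_⟩
    simp [p, AffineMap.lineMap_apply, abs_mul, abs_of_nonneg ht.1, mul_comm]
  have hg_path : ∀ t ∈ Set.Icc (0 : ℝ) 1,
      HasDerivAt (fun τ => g (p τ) - g x) ((y - x) • g' (p t)) t := fun t ht =>
    ((hg (p t) (hp t ht).1).scomp t AffineMap.hasDerivAt_lineMap).sub_const _
  have hB_path : ∀ t ∈ Set.Icc (0 : ℝ) 1,
      HasDerivAt (fun τ => B (|y - x| * τ) - B 0) (B' (|y - x| * t) * |y - x|) t := by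
    intro t ht
    have hmem : |y - x| * t ∈ Set.Icc 0 |y - x| :=
      ⟨mul_nonneg (abs_nonneg _) ht.1, mul_le_of_le_one_right (abs_nonneg _) ht.2⟩
    exact ((hB _ hmem).comp t (hasDerivAt_const_mul _)).sub_const _
  have hbound_path : ∀ t ∈ Set.Icc (0 : ℝ) 1,
      ‖(y - x) • g' (p t)‖ ≤ B' (|y - x| * t) * |y - x| := by
    intro t ht
    rw [norm_smul, Real.norm_eq_abs, mul_comm, ← (hp t ht).2]
    gcongr
    exact hbound _ (hp t ht).1
  simpa [p] using image_norm_le_of_norm_deriv_right_le_deriv_boundary'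
    (fun t ht => (hg_path t ht).continuousAt.continuousWithinAt)
    (fun t ht => (hg_path t (Set.Ico_subset_Icc_self ht)).hasDerivWithinAt)
    (by simp [p])
    (fun t ht => (hB_path t ht).continuousAt.continuousWithinAt)
    (fun t ht => (hB_path t (Set.Ico_subset_Icc_self ht)).hasDerivWithinAt)
    (fun t ht => hbound_path t (Set.Ico_subset_Icc_self ht)) (Set.right_mem_Icc.2 zero_le_one)

/-- Self-concordance of a real function on an open interval `s`: `h` is three times differentiable
on `s` and `|h'''| ≤ 2 (h'')^{3/2}` there. As in `ConvexOn`, the condition on `s` is part of the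
notion; the sign of `h''` is not (`Real.rpow` makes the right side `0` where `h'' < 0`). -/
structure IsSelfConcordantOn (s : Set ℝ) (h : ℝ → ℝ) : Prop where
  isOpen : IsOpen s
  convex : Convex ℝ s
  differentiableOn : DifferentiableOn ℝ h s
  differentiableOn_deriv : DifferentiableOn ℝ (deriv h) s
  differentiableOn_deriv_deriv : DifferentiableOn ℝ (deriv (deriv h)) s
  abs_deriv_deriv_deriv_le : ∀ x ∈ s,
    |deriv (deriv (deriv h)) x| ≤ 2 * (deriv (deriv h) x) ^ ((3 : ℝ) / 2)

namespace IsSelfConcordantOn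

variable {s : Set ℝ} {h : ℝ → ℝ} {x y r : ℝ}

theorem of_contDiffOn (hopen : IsOpen s) (hconv : Convex ℝ s) (hh : ContDiffOn ℝ 3 h s)
    (hbound : ∀ x ∈ s,
      |deriv (deriv (deriv h)) x| ≤ 2 * (deriv (deriv h) x) ^ ((3 : ℝ) / 2)) :
    IsSelfConcordantOn s h := by
  have hh' : ContDiffOn ℝ 2 (deriv h) s := hh.deriv_of_isOpen hopen (by norm_num)
  have hh'' : ContDiffOn ℝ 1 (deriv (deriv h)) s := hh'.deriv_of_isOpen hopen (by norm_num)
  exact ⟨hopen, hconv, hh.differentiableOn (by norm_num), hh'.differentiableOn (by norm_num),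
    hh''.differentiableOn (by norm_num), hbound⟩

theorem hasDerivAt_deriv (hh : IsSelfConcordantOn s h) (hx : x ∈ s) :
    HasDerivAt (deriv h) (deriv (deriv h) x) x :=
  (hh.differentiableOn_deriv.differentiableAt (hh.isOpen.mem_nhds hx)).hasDerivAt

theorem hasDerivAt_deriv_deriv (hh : IsSelfConcordantOn s h) (hx : x ∈ s) :
    HasDerivAt (deriv (deriv h)) (deriv (deriv (deriv h)) x) x :=
  (hh.differentiableOn_deriv_deriv.differentiableAt (hh.isOpen.mem_nhds hx)).hasDerivAt

theorem abs_deriv_deriv_deriv_le_sqrt_pow (hh : IsSelfConcordantOn s h) (hx : x ∈ s)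
    (hpos : 0 ≤ deriv (deriv h) x) :
    |deriv (deriv (deriv h)) x| ≤ 2 * √(deriv (deriv h) x) ^ 3 := by
  have hbound := hh.abs_deriv_deriv_deriv_le x hx
  rwa [Real.rpow_div_two_eq_sqrt _ hpos, Real.rpow_ofNat] at hbound

theorem lipschitzOnWith_inv_sqrt_deriv_deriv (hh : IsSelfConcordantOn s h)
    (hpos : ∀ x ∈ s, 0 < deriv (deriv h) x) :
    LipschitzOnWith 1 (fun x => (√(deriv (deriv h) x))⁻¹) s := by
  refine hh.convex.lipschitzOnWith_of_nnnorm_hasDerivWithin_le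
    (fun x hx => (hasDerivAt_inv_sqrt_comp (hh.hasDerivAt_deriv_deriv hx)
      (hpos x hx)).hasDerivWithinAt) fun x hx => ?_
  have hsqrt : 0 < √(deriv (deriv h) x) := Real.sqrt_pos.2 (hpos x hx)
  rw [← NNReal.coe_le_coe, coe_nnnorm, NNReal.coe_one, norm_div, norm_neg, Real.norm_eq_abs,
    Real.norm_of_nonneg (by positivity)]
  exact div_le_one_of_le₀ (hh.abs_deriv_deriv_deriv_le_sqrt_pow hx (hpos x hx).le) (by positivity)

theorem one_sub_mul_sqrt_le_and_sqrt_le_one_add_mul (hh : IsSelfConcordantOn s h)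
    (hpos : ∀ x ∈ s, 0 < deriv (deriv h) x) (hx : x ∈ s) (hy : y ∈ s)
    (hr : √(deriv (deriv h) x) * |y - x| ≤ r) :
    (1 - r) * √(deriv (deriv h) y) ≤ √(deriv (deriv h) x) ∧
      √(deriv (deriv h) x) ≤ (1 + r) * √(deriv (deriv h) y) := by
  refine one_sub_mul_le_and_le_one_add_mul_of_abs_inv_sub_inv_le (Real.sqrt_pos.2 (hpos x hx))
    (Real.sqrt_pos.2 (hpos y hy)) (le_trans ?_ hr)
  refine mul_le_mul_of_nonneg_left ?_ (Real.sqrt_nonneg _)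
  simpa only [Real.dist_eq, NNReal.coe_one, one_mul] using
    (hh.lipschitzOnWith_inv_sqrt_deriv_deriv hpos).dist_le_mul y hy x hx

theorem deriv_deriv_le_div_sq (hh : IsSelfConcordantOn s h)
    (hpos : ∀ x ∈ s, 0 < deriv (deriv h) x) (hx : x ∈ s) (hy : y ∈ s)
    (hr : √(deriv (deriv h) x) * |y - x| ≤ r) (hr_lt : r < 1) :
    deriv (deriv h) y ≤ deriv (deriv h) x / (1 - r) ^ 2 := by
  have : 0 < 1 - r := sub_pos.2 hr_lt
  rw [le_div_iff₀ (by positivity)]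
  calc deriv (deriv h) y * (1 - r) ^ 2 = ((1 - r) * √(deriv (deriv h) y)) ^ 2 := by
        rw [mul_pow, Real.sq_sqrt (hpos y hy).le, mul_comm]
    _ ≤ √(deriv (deriv h) x) ^ 2 := by
        gcongr
        exact (hh.one_sub_mul_sqrt_le_and_sqrt_le_one_add_mul hpos hx hy hr).1
    _ = deriv (deriv h) x := Real.sq_sqrt (hpos x hx).le

theorem abs_deriv_sub_deriv_le (hh : IsSelfConcordantOn s h)
    (hpos : ∀ x ∈ s, 0 < deriv (deriv h) x) (hx : x ∈ s) (hy : y ∈ s)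
    (hr : √(deriv (deriv h) x) * |y - x| ≤ r) (hr_lt : r < 1) :
    |deriv h y - deriv h x| ≤ √(deriv (deriv h) x) * (r / (1 - r)) := by
  set u := √(deriv (deriv h) x)
  have hu_sq : u ^ 2 = deriv (deriv h) x := Real.sq_sqrt (hpos x hx).le
  have hlt_one : ∀ t ≤ |y - x|, u * t < 1 := fun t ht => by
    calc u * t ≤ u * |y - x| := by gcongr
      _ < 1 := hr.trans_lt hr_lt
  have hgap : 0 < 1 - u * |y - x| := sub_pos.2 (hlt_one _ le_rfl)
  have hsegment : segment ℝ x y ⊆ s := hh.convex.segment_subset hx hy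
  have hbound : ∀ z ∈ segment ℝ x y, ‖deriv (deriv h) z‖ ≤ u ^ 2 / (1 - u * |z - x|) ^ 2 := by
    intro z hz
    have hdist : |z - x| ≤ |y - x| := Set.abs_sub_left_of_mem_uIcc (segment_eq_uIcc x y ▸ hz)
    rw [Real.norm_of_nonneg (hpos z (hsegment hz)).le, hu_sq]
    exact hh.deriv_deriv_le_div_sq hpos hx (hsegment hz) le_rfl (hlt_one _ hdist)
  calc |deriv h y - deriv h x| ≤ u * (1 - u * |y - x|)⁻¹ - u * (1 - u * 0)⁻¹ :=
        norm_image_sub_le_of_norm_deriv_le_deriv_dist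
          (fun z hz => hh.hasDerivAt_deriv (hsegment hz))
          (fun t ht => hasDerivAt_mul_inv_one_sub_mul (sub_pos.2 (hlt_one t ht.2)).ne') hbound
    _ = u * (u * |y - x| / (1 - u * |y - x|)) := by field_simp; ring
    _ ≤ u * (r / (1 - r)) := by
        have : 0 < 1 - r := sub_pos.2 hr_lt
        have : 0 ≤ r := le_trans (by positivity) hr
        gcongr

end IsSelfConcordantOn

/-- The length `ℓ = (α⁻¹ ζ'')^{1/2}` that an edge with cost `ζ` has at flow value `x`; it is the
scale in which both the flow and the gradient `ζ'` are measured. -/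
def edgeLength (α : ℝ) (ζ : ℝ → ℝ) (x : ℝ) : ℝ :=
  √(α⁻¹ * deriv (deriv ζ) x)

theorem edgeLength_nonneg (α : ℝ) (ζ : ℝ → ℝ) (x : ℝ) : 0 ≤ edgeLength α ζ x :=
  Real.sqrt_nonneg _

section EdgeLength

variable {α ε : ℝ} {I : Set ℝ} {ζ : ℝ → ℝ} {x y : ℝ}

theorem sqrt_deriv_deriv_eq_two_mul_edgeLength (α : ℝ) (ζ : ℝ → ℝ) (x : ℝ) :
    √(deriv (deriv fun s => 4 * α⁻¹ * ζ s) x) = 2 * edgeLength α ζ x := by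
  rw [deriv_deriv_const_mul, mul_assoc, Real.sqrt_mul (by norm_num),
    show (4 : ℝ) = 2 ^ 2 by norm_num, Real.sqrt_sq (by norm_num), edgeLength]

theorem deriv_deriv_four_mul_inv_mul_pos (hα : 0 < α) (hζ'' : ∀ x ∈ I, 0 < deriv (deriv ζ) x) :
    ∀ x ∈ I, 0 < deriv (deriv fun s => 4 * α⁻¹ * ζ s) x := fun x hx => by
  rw [deriv_deriv_const_mul]
  exact mul_pos (by positivity) (hζ'' x hx)

theorem sqrt_deriv_deriv_mul_abs_sub_le (hclose : |edgeLength α ζ x * (x - y)| ≤ ε) :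
    √(deriv (deriv fun s => 4 * α⁻¹ * ζ s) x) * |y - x| ≤ 2 * ε := by
  rw [abs_mul, abs_of_nonneg (edgeLength_nonneg α ζ x)] at hclose
  rw [sqrt_deriv_deriv_eq_two_mul_edgeLength, abs_sub_comm, mul_assoc]
  gcongr

theorem one_sub_mul_edgeLength_le_and_edgeLength_le_one_add_mul (hα : 0 < α)
    (hζ : IsSelfConcordantOn I fun s => 4 * α⁻¹ * ζ s) (hζ'' : ∀ x ∈ I, 0 < deriv (deriv ζ) x)
    (hx : x ∈ I) (hy : y ∈ I) (hclose : |edgeLength α ζ x * (x - y)| ≤ ε) :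
    (1 - 2 * ε) * edgeLength α ζ y ≤ edgeLength α ζ x ∧
      edgeLength α ζ x ≤ (1 + 2 * ε) * edgeLength α ζ y := by
  have hsqrt := hζ.one_sub_mul_sqrt_le_and_sqrt_le_one_add_mul
    (deriv_deriv_four_mul_inv_mul_pos hα hζ'') hx hy (sqrt_deriv_deriv_mul_abs_sub_le hclose)
  rw [sqrt_deriv_deriv_eq_two_mul_edgeLength, sqrt_deriv_deriv_eq_two_mul_edgeLength] at hsqrt
  exact ⟨by linarith [hsqrt.1], by linarith [hsqrt.2]⟩

theorem abs_deriv_sub_deriv_le_mul_edgeLength (hα : 0 < α)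
    (hζ : IsSelfConcordantOn I fun s => 4 * α⁻¹ * ζ s) (hζ'' : ∀ x ∈ I, 0 < deriv (deriv ζ) x)
    (hx : x ∈ I) (hy : y ∈ I) (hclose : |edgeLength α ζ x * (x - y)| ≤ ε) (hε : 2 * ε < 1) :
    |deriv ζ x - deriv ζ y| ≤ α / (1 - 2 * ε) * (ε * edgeLength α ζ x) := by
  have hgrad := hζ.abs_deriv_sub_deriv_le (deriv_deriv_four_mul_inv_mul_pos hα hζ'') hx hy
    (sqrt_deriv_deriv_mul_abs_sub_le hclose) hε
  rw [sqrt_deriv_deriv_eq_two_mul_edgeLength, deriv_const_mul_field', ← mul_sub, abs_mul,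
    abs_of_pos (by positivity)] at hgrad
  calc |deriv ζ x - deriv ζ y| = α / 4 * (4 * α⁻¹ * |deriv ζ y - deriv ζ x|) := by
        rw [abs_sub_comm]; field_simp
    _ ≤ α / 4 * (2 * edgeLength α ζ x * (2 * ε / (1 - 2 * ε))) :=
        mul_le_mul_of_nonneg_left hgrad (by positivity)
    _ = α / (1 - 2 * ε) * (ε * edgeLength α ζ x) := by ring

end EdgeLength

theorem stmt19_general {α ε : ℝ} {I : Set ℝ} {ζ : ℝ → ℝ} {x y : ℝ}
    (hα : 0 < α) (hαε : α ≤ 1 - 2 * ε) (hε : ε ≤ 3 / 10)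
    (hζ : IsSelfConcordantOn I fun s => 4 * α⁻¹ * ζ s) (hζ'' : ∀ x ∈ I, 0 < deriv (deriv ζ) x)
    (hx : x ∈ I) (hy : y ∈ I) (hclose : |edgeLength α ζ x * (x - y)| ≤ ε) :
    ((1 + 5 * ε)⁻¹ * edgeLength α ζ y ≤ edgeLength α ζ x ∧
      edgeLength α ζ x ≤ (1 + 5 * ε) * edgeLength α ζ y) ∧
      |deriv ζ x - deriv ζ y| ≤ ε * edgeLength α ζ x := by
  have hε_nonneg : 0 ≤ ε := (abs_nonneg _).trans hclose
  obtain ⟨hlower, hupper⟩ :=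
    one_sub_mul_edgeLength_le_and_edgeLength_le_one_add_mul hα hζ hζ'' hx hy hclose
  refine ⟨⟨?_, ?_⟩, ?_⟩
  · rw [inv_mul_le_iff₀ (by positivity)]
    calc edgeLength α ζ y ≤ (1 + 5 * ε) * (1 - 2 * ε) * edgeLength α ζ y :=
          le_mul_of_one_le_left (edgeLength_nonneg α ζ y) (by nlinarith)
      _ = (1 + 5 * ε) * ((1 - 2 * ε) * edgeLength α ζ y) := mul_assoc _ _ _
      _ ≤ (1 + 5 * ε) * edgeLength α ζ x := by gcongr
  · exact hupper.trans (mul_le_mul_of_nonneg_right (by linarith) (edgeLength_nonneg α ζ y))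
  · calc |deriv ζ x - deriv ζ y| ≤ α / (1 - 2 * ε) * (ε * edgeLength α ζ x) :=
          abs_deriv_sub_deriv_le_mul_edgeLength hα hζ hζ'' hx hy hclose (by linarith)
      _ ≤ ε * edgeLength α ζ x := mul_le_of_le_one_left
          (mul_nonneg hε_nonneg (edgeLength_nonneg α ζ x)) (div_le_one_of_le₀ hαε (by linarith))

/-- stability of lengths and gradients for self-concordant edge
costs: for edge costs `ζ_e` that are `C³` with `ζ_e'' > 0` on an open interval `I_e`
(an open convex subset of `ℝ`) and such that `4 α⁻¹ ζ_e` is self-concordant on `I_e`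
(i.e. `|h'''| ≤ 2 h''^{3/2}` for `h = 4 α⁻¹ ζ_e`), the lengths
`ℓ(f)_e = (α⁻¹ ζ_e''(f_e))^{1/2}` and gradients `g(f)_e = ζ_e'(f_e)` are stable: if
`‖L(f)(f - f̄)‖_∞ ≤ ε < 1/1000`, then `ℓ(f)_e ≈_{1+5ε} ℓ(f̄)_e` and
`|g(f)_e - g(f̄)_e| ≤ ε ℓ(f)_e` for every `e`. -/
theorem stmt19
    {E : Type} [Fintype E]
    (α : ℝ) (hα : 0 < α ∧ α ≤ 1 / 2)
    (I : E → Set ℝ) (hIopen : ∀ e, IsOpen (I e)) (hIconv : ∀ e, Convex ℝ (I e))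
    (ζ : E → ℝ → ℝ)
    (hζ : ∀ e, ContDiffOn ℝ 3 (ζ e) (I e))
    (hζ'' : ∀ e, ∀ x ∈ I e, 0 < deriv (deriv (ζ e)) x)
    (hselfcon : ∀ e, ∀ x ∈ I e,
      |deriv (deriv (deriv fun s => 4 * α⁻¹ * ζ e s)) x|
        ≤ 2 * (deriv (deriv fun s => 4 * α⁻¹ * ζ e s) x) ^ ((3 : ℝ) / 2))
    (ε : ℝ) (hε : 0 < ε ∧ ε < 1 / 1000)
    (f fb : E → ℝ) (hf : ∀ e, f e ∈ I e) (hfb : ∀ e, fb e ∈ I e)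
    (hclose : ∀ e,
      |Real.sqrt (α⁻¹ * deriv (deriv (ζ e)) (f e)) * (f e - fb e)| ≤ ε) :
    ∀ e,
      ((1 + 5 * ε)⁻¹ * Real.sqrt (α⁻¹ * deriv (deriv (ζ e)) (fb e))
          ≤ Real.sqrt (α⁻¹ * deriv (deriv (ζ e)) (f e)) ∧
        Real.sqrt (α⁻¹ * deriv (deriv (ζ e)) (f e))
          ≤ (1 + 5 * ε) * Real.sqrt (α⁻¹ * deriv (deriv (ζ e)) (fb e))) ∧
        |deriv (ζ e) (f e) - deriv (ζ e) (fb e)|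
          ≤ ε * Real.sqrt (α⁻¹ * deriv (deriv (ζ e)) (f e)) :=
  fun e => stmt19_general hα.1 (by linarith) (by linarith)
    (.of_contDiffOn (hIopen e) (hIconv e) (contDiffOn_const.mul (hζ e)) (hselfcon e))
    (hζ'' e) (hf e) (hfb e) (hclose e)
end
end
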